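/- Let R be a commutative unital ring whose characteristic ℓ is either an odd positive integer or 0, and let G_R be the Grassmann algebra over R (the exterior algebra of the free R-module on a countably infinite basis). Then for every n ≥ 1 there is an isomorphism of abelian groups P_n(ℤ)/(P_n(ℤ) ∩ Id(G_R,ℤ)) ≅ (ℤ/ℓℤ)^{2^{n−1}}, where ℤ/0ℤ = ℤ. -/

import Mathlib

/-- The free unital associative ring `ℤ⟨x_1, x_2, …⟩` on countably many
(0-indexed) variables. -/
abbrev FA : Type := FreeAlgebra ℤ ℕ

/-- The variable `x_{i+1}` (0-indexed: `X i`). -/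
noncomputable def X (i : ℕ) : FA := FreeAlgebra.ι ℤ i

/-- `P_n(ℤ)`: the additive subgroup of `ℤ⟨X⟩` generated by the multilinear monomials
`x_{σ(1)} x_{σ(2)} ⋯ x_{σ(n)}`, `σ ∈ S_n` (variables 0-indexed). -/
noncomputable def Pn (n : ℕ) : AddSubgroup FA :=
  AddSubgroup.closure
    {w | ∃ σ : Equiv.Perm (Fin n), w = (List.ofFn fun i => X (σ i)).prod}

/-- `Id(R, ℤ)` (inside the free algebra): the elements vanishing under every
substitution of elements of `R` for the variables. -/
noncomputable def IdA (R : Type*) [Ring R] : AddSubgroup FA where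
  carrier := {f | ∀ v : ℕ → R, FreeAlgebra.lift ℤ v f = 0}
  zero_mem' := fun v => map_zero _
  add_mem' := fun hf hg v => by rw [map_add, hf v, hg v, add_zero]
  neg_mem' := fun hf v => by rw [map_neg, hf v, neg_zero]

/-- Left-normed iterated commutator: `commList a [b₁, …, b_k] = [a, b₁, …, b_k]`
(`commList a [] = a`), where `[a,b] = ab - ba`. -/
def commList {A : Type*} [NonUnitalRing A] : A → List A → A
  | a, [] => a
  | a, b :: l => commList (a * b - b * a) l

/-- The left-normed long commutator `[x_{i₁}, …, x_{i_k}]` of a list of variable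
indices (junk value `0` for the empty list). -/
noncomputable def lcWord : List ℕ → FA
  | [] => 0
  | a :: l => commList (X a) l

/-- `Γ_n(ℤ)`: the additive subgroup of `P_n(ℤ)` generated by the proper multilinear
polynomials: products `c₁ c₂ ⋯ c_r` of long commutators (each of length ≥ 2) in which
each of the `n` variables occurs exactly once. -/
noncomputable def Gamma (n : ℕ) : AddSubgroup FA :=
  AddSubgroup.closure
    {w | ∃ L : List (List (Fin n)),
      (∀ l ∈ L, 2 ≤ l.length) ∧ L.flatten.Perm (List.finRange n) ∧
      w = (L.map fun l => lcWord (l.map Fin.val)).prod}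

/-- The two-sided ideal of the (unital) ring `FA` generated by a set `S`:
the additive subgroup generated by all products `a * s * b`, `s ∈ S`. -/
noncomputable def tsIdeal (S : Set FA) : AddSubgroup FA :=
  AddSubgroup.closure {w | ∃ a s b : FA, s ∈ S ∧ w = a * s * b}

/-- Renaming of variables: the endomorphism of `FA` sending `x_i ↦ x_{π(i)}` for the
first `n` variables (and fixing the remaining ones), for `π ∈ S_n`. -/
noncomputable def rename {n : ℕ} (π : Equiv.Perm (Fin n)) : FA →ₐ[ℤ] FA :=
  FreeAlgebra.lift ℤ (fun i => if h : i < n then X (π ⟨i, h⟩) else X i)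

/-! For a finite set `S` of letters let `ε_S` be the functional on multilinear polynomials sending a
word to the sign of sorting it when the letters of `S` anticommute and all others commute. An
element of an exterior algebra is the sum of an even, hence central, element and an odd one, and
odd elements anticommute. Expanding multilinearly, a multilinear `f` takes on any elements of the
exterior algebra a value which is a sum of terms `ε_S(f)` times a sorted product; substituting
basis vectors for the letters of `S` and `1` for the others singles out `ε_S(f)`. So `f` is an
identity if and only if every `ε_S(f)` vanishes in `R`. For odd `|S|`, `ε_S` is an integral linear
combination of the `ε_{S \ {s}}`, so only the sets of even size matter; there are `2 ^ (m - 1)` of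
them if there are `m` letters.

These remaining functionals are independent up to a power of `2`: the product of the letters
outside an even set `T` with the commutators of consecutive pairs of letters of `T` is killed by
`ε_S` unless `T ⊆ S`, while `ε_T` sends it to `2 ^ (|T| / 2)`. The image of all even `ε_S`
modulo `ℓ` therefore has `2`-power torsion cokernel in `(ZMod ℓ) ^ (2 ^ (m - 1))`. If `ℓ` is odd
the cokernel is `0`, and if `ℓ = 0` the image is a subgroup of full rank of a free abelian group.
-/

section Signs

variable {α : Type*} [LinearOrder α] {S T : Finset α} {a b s : α} {l : List α}

/-- The sign produced when the letter `a` moves to the right past the letter `b`, if letters of `S`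
anticommute with each other and only a smaller letter `b` has to be passed. -/
def crossSign (S : Finset α) (a b : α) : ℤ := if a ∈ S ∧ b ∈ S ∧ b < a then -1 else 1

/-- The sign produced by inserting the letter `a` into the sorted rearrangement of `l`. -/
def insertSign (S : Finset α) (a : α) (l : List α) : ℤ := (l.map (crossSign S a)).prod

/-- The sign produced by sorting a word when the letters of `S` anticommute with each other and
all other pairs of letters commute. -/
def superSign (S : Finset α) : List α → ℤ
  | [] => 1
  | a :: l => insertSign S a l * superSign S l

lemma crossSign_of_notMem_left (ha : a ∉ S) : crossSign S a b = 1 := by simp [crossSign, ha]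

lemma crossSign_of_notMem_right (hb : b ∉ S) : crossSign S a b = 1 := by simp [crossSign, hb]

lemma crossSign_of_le (h : a ≤ b) : crossSign S a b = 1 := by simp [crossSign, h]

lemma crossSign_congr (ha : a ∈ S ↔ a ∈ T) (hb : b ∈ S ↔ b ∈ T) :
    crossSign S a b = crossSign T a b := by
  simp only [crossSign, ha, hb]

lemma crossSign_mul_swap (ha : a ∈ S) (hb : b ∈ S) (hab : a ≠ b) :
    crossSign S a b * crossSign S b a = -1 := by
  rcases hab.lt_or_gt with h | h <;> simp [crossSign, ha, hb, h, h.not_gt]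

lemma crossSign_mul_self (S : Finset α) (a b : α) : crossSign S a b * crossSign S a b = 1 := by
  unfold crossSign
  split_ifs <;> rfl

lemma insertSign_cons (S : Finset α) (a b : α) (l : List α) :
    insertSign S a (b :: l) = crossSign S a b * insertSign S a l :=
  List.prod_cons

lemma insertSign_eq_one (h : ∀ b ∈ l, crossSign S a b = 1) : insertSign S a l = 1 :=
  List.prod_eq_one (by simpa using h)

lemma insertSign_congr (h : ∀ b ∈ a :: l, b ∈ S ↔ b ∈ T) : insertSign S a l = insertSign T a l :=
  congrArg List.prod <| List.map_congr_left fun b hb ↦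
    crossSign_congr (h a List.mem_cons_self) (h b (List.mem_cons_of_mem a hb))

lemma superSign_eq_one (h : l.Pairwise fun a b ↦ crossSign S a b = 1) : superSign S l = 1 := by
  induction l with
  | nil => rfl
  | cons a l ih =>
    rw [superSign, insertSign_eq_one (List.pairwise_cons.1 h).1, ih h.of_cons, one_mul]

lemma superSign_congr (h : ∀ a ∈ l, a ∈ S ↔ a ∈ T) : superSign S l = superSign T l := by
  induction l with
  | nil => rfl
  | cons a l ih =>
    rw [superSign, superSign, insertSign_congr h, ih fun b hb ↦ h b (List.mem_cons_of_mem a hb)]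

lemma mem_erase_iff_of_ne {β : Type*} [DecidableEq β] {S : Finset β} {a b : β} (hab : b ≠ a) :
    b ∈ S.erase a ↔ b ∈ S := by
  simp [hab]

lemma insertSign_erase (hl : l.Nodup) (hs : s ∈ l) (hsa : s ≠ a) :
    insertSign (S.erase s) a l = crossSign S a s * insertSign S a l := by
  induction l with
  | nil => simp at hs
  | cons b l ih =>
    rw [List.nodup_cons] at hl
    rw [insertSign_cons, insertSign_cons]
    obtain rfl | hsl := List.mem_cons.1 hs
    · rw [crossSign_of_notMem_right (Finset.notMem_erase s S), one_mul, ← mul_assoc,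
        crossSign_mul_self, one_mul]
      refine insertSign_congr fun c hc ↦ mem_erase_iff_of_ne ?_
      rintro rfl
      exact (List.mem_cons.1 hc).elim hsa hl.1
    · have hbs : b ≠ s := fun h ↦ hl.1 (h ▸ hsl)
      rw [ih hl.2 hsl, mul_left_comm,
        crossSign_congr (mem_erase_iff_of_ne hsa.symm) (mem_erase_iff_of_ne hbs)]

lemma superSign_erase_cons_self (hal : a ∉ l) : superSign (S.erase a) (a :: l) = superSign S l := by
  rw [superSign, insertSign_eq_one fun b _ ↦ crossSign_of_notMem_left (Finset.notMem_erase a S),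
    one_mul]
  exact superSign_congr fun b hb ↦ mem_erase_iff_of_ne (ne_of_mem_of_not_mem hb hal)

lemma insertSign_mul_superSign_erase_cons (hl : (a :: l).Nodup) (ha : a ∈ S) (hs : s ∈ l)
    (hsS : s ∈ S) :
    insertSign S s (a :: l) * superSign (S.erase s) (a :: l) =
      -insertSign S a l * (insertSign S s l * superSign (S.erase s) l) := by
  rw [List.nodup_cons] at hl
  have hsa : s ≠ a := ne_of_mem_of_not_mem hs hl.1
  rw [insertSign_cons, superSign, insertSign_erase hl.2 hs hsa]
  linear_combination insertSign S s l * insertSign S a l * superSign (S.erase s) l *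
    crossSign_mul_swap hsS ha hsa

/- The successive letters of `S` in `l` contribute alternately `1` and `-1` times the sign of
`l`. -/
lemma sum_insertSign_mul_superSign_erase (S : Finset α) (hl : l.Nodup) :
    ∑ s ∈ l.toFinset ∩ S, insertSign S s l * superSign (S.erase s) l =
      if Odd (l.toFinset ∩ S).card then superSign S l else 0 := by
  induction l with
  | nil => simp
  | cons a l ih =>
    obtain ⟨hal, hl'⟩ := List.nodup_cons.1 hl
    rw [List.toFinset_cons]
    by_cases ha : a ∈ S
    · have haS : a ∉ l.toFinset ∩ S := by simp [hal]
      have hterm : ∀ s ∈ l.toFinset ∩ S, _ = _ := fun s hs ↦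
        insertSign_mul_superSign_erase_cons hl ha (List.mem_toFinset.1 (Finset.mem_inter.1 hs).1)
          (Finset.mem_inter.1 hs).2
      rw [Finset.insert_inter_of_mem ha, Finset.sum_insert haS, Finset.sum_congr rfl hterm,
        ← Finset.mul_sum, ih hl', Finset.card_insert_of_notMem haS, superSign_erase_cons_self hal,
        insertSign_cons, crossSign_of_le le_rfl, one_mul, superSign]
      by_cases hodd : Odd (l.toFinset ∩ S).card <;> simp [hodd, Nat.odd_add_one]
    · have hins (l : List α) : insertSign S a l = 1 :=
        insertSign_eq_one fun b _ ↦ crossSign_of_notMem_left ha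
      rw [Finset.insert_inter_of_notMem ha, superSign, hins, one_mul, ← ih hl']
      refine Finset.sum_congr rfl fun s _ ↦ ?_
      rw [insertSign_cons, crossSign_of_notMem_right ha, one_mul, superSign,
        insertSign_eq_one fun b _ ↦ crossSign_of_notMem_left fun h ↦ ha (Finset.mem_of_mem_erase h),
        one_mul]

end Signs

/-- A family `v` in a ring supercommutes with respect to `S` if its members with index in `S`
anticommute with each other and each other member commutes with the whole family. -/
structure Supercommutes {α A : Type*} [Ring A] (S : Finset α) (v : α → A) : Prop where
  commute : ∀ i j, i ∉ S → Commute (v i) (v j)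
  anticommute : ∀ i j, i ∈ S → j ∈ S → i ≠ j → v i * v j = -(v j * v i)

namespace Supercommutes

variable {α A : Type*} [LinearOrder α] [Ring A] {S : Finset α} {v : α → A}

lemma mul_eq_crossSign_smul (hv : Supercommutes S v) {a b : α} (hba : b < a) :
    v a * v b = crossSign S a b • (v b * v a) := by
  by_cases ha : a ∈ S
  · by_cases hb : b ∈ S
    · rw [hv.anticommute a b ha hb hba.ne']
      simp [crossSign, ha, hb, hba]
    · rw [crossSign_of_notMem_right hb, one_smul, (hv.commute b a hb).eq]
  · rw [crossSign_of_notMem_left ha, one_smul, (hv.commute a b ha).eq]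

lemma mul_prod_map_eq_insertSign_smul (hv : Supercommutes S v) (a : α) {l : List α}
    (hl : l.Pairwise (· ≤ ·)) :
    v a * (l.map v).prod = insertSign S a l • ((l.orderedInsert (· ≤ ·) a).map v).prod := by
  induction l with
  | nil => simp [insertSign]
  | cons b l ih =>
    by_cases hab : a ≤ b
    · have hle : ∀ c ∈ b :: l, a ≤ c :=
        List.forall_mem_cons.2 ⟨hab, fun c hc ↦ hab.trans (List.rel_of_pairwise_cons hl hc)⟩
      rw [insertSign_eq_one fun c hc ↦ crossSign_of_le (hle c hc), one_smul,
        List.orderedInsert_cons_of_le _ _ hab, List.map_cons (a := a), List.prod_cons]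
    · rw [List.orderedInsert_of_not_le _ _ hab, List.map_cons, List.prod_cons, List.map_cons,
        List.prod_cons, ← mul_assoc, hv.mul_eq_crossSign_smul (not_le.1 hab), smul_mul_assoc,
        mul_assoc, ih hl.of_cons, mul_smul_comm, smul_smul, insertSign_cons]

lemma prod_map_eq_superSign_smul_insertionSort (hv : Supercommutes S v) (l : List α) :
    (l.map v).prod = superSign S l • ((l.insertionSort (· ≤ ·)).map v).prod := by
  induction l with
  | nil => simp [superSign]
  | cons a l ih =>
    have hperm : insertSign S a (l.insertionSort (· ≤ ·)) = insertSign S a l :=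
      ((List.perm_insertionSort _ l).map _).prod_eq
    rw [List.map_cons, List.prod_cons, ih, mul_smul_comm,
      hv.mul_prod_map_eq_insertSign_smul a (List.pairwise_insertionSort _ _), hperm, smul_smul,
      mul_comm, superSign, List.insertionSort_cons]

lemma prod_map_eq_superSign_smul (hv : Supercommutes S v) {l w : List α}
    (hl : l.Pairwise (· ≤ ·)) (hw : w.Perm l) :
    (w.map v).prod = superSign S w • (l.map v).prod := by
  have hsort : w.insertionSort (· ≤ ·) = l :=
    ((List.perm_insertionSort _ w).trans hw).eq_of_pairwise' (List.pairwise_insertionSort _ _) hl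
  rw [hv.prod_map_eq_superSign_smul_insertionSort w, hsort]

end Supercommutes

section Multilinear

variable {α : Type*}

/-- The monomial of the free ring attached to a word. -/
noncomputable def wordMonomial (w : List α) : FreeAlgebra ℤ α := (w.map (FreeAlgebra.ι ℤ)).prod

/-- The multilinear polynomials in the letters of `l`: the additive subgroup generated by the
monomials of the rearrangements of `l`. It generalizes `Pn m`, the case `l = List.range m`. -/
noncomputable def multilinearSpan (l : List α) : AddSubgroup (FreeAlgebra ℤ α) :=
  AddSubgroup.closure (wordMonomial '' {w | w.Perm l})

lemma wordMonomial_append (w w' : List α) :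
    wordMonomial (w ++ w') = wordMonomial w * wordMonomial w' := by
  simp [wordMonomial]

lemma lift_wordMonomial {A : Type*} [Ring A] (v : α → A) (w : List α) :
    FreeAlgebra.lift ℤ v (wordMonomial w) = (w.map v).prod := by
  rw [wordMonomial, map_list_prod, List.map_map]
  exact congrArg (fun u ↦ (w.map u).prod) (FreeAlgebra.ι_comp_lift v)

lemma wordMonomial_mem_multilinearSpan {l w : List α} (h : w.Perm l) :
    wordMonomial w ∈ multilinearSpan l :=
  AddSubgroup.subset_closure ⟨w, h, rfl⟩

lemma multilinearSpan_congr {l l' : List α} (h : l.Perm l') :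
    multilinearSpan l = multilinearSpan l' := by
  unfold multilinearSpan
  simp only [h.congr_right]

lemma mul_mem_multilinearSpan {l l' : List α} {f g : FreeAlgebra ℤ α} (hf : f ∈ multilinearSpan l)
    (hg : g ∈ multilinearSpan l') : f * g ∈ multilinearSpan (l ++ l') := by
  have hword : ∀ w : List α, w.Perm l →
      multilinearSpan l' ≤ (multilinearSpan (l ++ l')).comap (.mulLeft (wordMonomial w)) := by
    refine fun w hw ↦ (AddSubgroup.closure_le _).2 ?_
    rintro _ ⟨w', hw', rfl⟩
    have h := wordMonomial_mem_multilinearSpan (hw.append hw')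
    rwa [wordMonomial_append] at h
  have hspan : multilinearSpan l ≤ (multilinearSpan (l ++ l')).comap (.mulRight g) := by
    refine (AddSubgroup.closure_le _).2 ?_
    rintro _ ⟨w, hw, rfl⟩
    exact hword w hw hg
  exact hspan hf

lemma eq_of_mem_multilinearSpan {N : Type*} [AddCommGroup N] {F G : FreeAlgebra ℤ α →+ N}
    {l : List α} (h : ∀ w : List α, w.Perm l → F (wordMonomial w) = G (wordMonomial w))
    {f : FreeAlgebra ℤ α} (hf : f ∈ multilinearSpan l) : F f = G f :=
  AddMonoidHom.eqOn_closure (Set.forall_mem_image.2 h) hf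

lemma exists_perm_ofFn_eq_iff_perm_range {m : ℕ} {w : List ℕ} :
    (∃ σ : Equiv.Perm (Fin m), List.ofFn (fun i ↦ (σ i : ℕ)) = w) ↔ w.Perm (List.range m) := by
  constructor
  · rintro ⟨σ, rfl⟩
    have h := (σ.map_finRange_perm).map Fin.val
    rwa [List.map_coe_finRange_eq_range, List.map_map, ← List.ofFn_eq_map] at h
  · intro hw
    obtain rfl : w.length = m := by simpa using hw.length_eq
    have hlt (i : Fin w.length) : w.get i < w.length :=
      List.mem_range.1 (hw.mem_iff.1 (w.get_mem i))
    have hinj : Function.Injective fun i ↦ (⟨w.get i, hlt i⟩ : Fin w.length) := fun i j hij ↦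
      List.nodup_iff_injective_get.1 (hw.nodup_iff.2 List.nodup_range) (Fin.ext_iff.1 hij)
    exact ⟨Equiv.ofBijective _ (Finite.injective_iff_bijective.1 hinj), List.ofFn_get w⟩

lemma Pn_eq_multilinearSpan (m : ℕ) : Pn m = multilinearSpan (List.range m) := by
  rw [Pn, multilinearSpan]
  congr 1
  ext f
  simp only [Set.mem_image, Set.mem_ofPred_eq, ← exists_perm_ofFn_eq_iff_perm_range]
  simp [wordMonomial, List.map_ofFn, eq_comm, Function.comp_def, X]

end Multilinear

section SignFunctional

variable {α : Type*} [LinearOrder α] {S : Finset α} {l : List α} {f : FreeAlgebra ℤ α}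

/-- The functional on the free ring sending the monomial of each word to its sign with respect
to `S`. -/
noncomputable def signFunctional (S : Finset α) : FreeAlgebra ℤ α →+ ℤ :=
  ((FreeAlgebra.basisFreeMonoid ℤ α).constr ℤ fun w ↦ superSign S w.toList).toAddMonoidHom

lemma signFunctional_wordMonomial (S : Finset α) (w : List α) :
    signFunctional S (wordMonomial w) = superSign S w := by
  have h : wordMonomial w = FreeAlgebra.basisFreeMonoid ℤ α (FreeMonoid.ofList w) := by
    simp only [wordMonomial, FreeAlgebra.basisFreeMonoid, FreeAlgebra.equivMonoidAlgebraFreeMonoid,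
      MonoidAlgebra.of_apply, LinearEquiv.trans_symm, Module.Basis.map_apply,
      Finsupp.coe_basisSingleOne, LinearEquiv.trans_apply,
      MonoidAlgebra.coeffLinearEquiv_symm_apply, MonoidAlgebra.ofCoeff_single,
      AlgEquiv.coe_symm_toLinearEquiv, AlgEquiv.ofAlgHom_symm_apply, MonoidAlgebra.lift_single,
      FreeMonoid.lift_apply, FreeMonoid.toList_ofList]
    exact (one_smul ℤ _).symm
  rw [h]
  exact (FreeAlgebra.basisFreeMonoid ℤ α).constr_basis ℤ _ _

lemma Supercommutes.lift_eq_signFunctional_smul {A : Type*} [Ring A] {v : α → A}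
    (hv : Supercommutes S v) (hl : l.Pairwise (· ≤ ·)) (hf : f ∈ multilinearSpan l) :
    FreeAlgebra.lift ℤ v f = signFunctional S f • (l.map v).prod := by
  refine eq_of_mem_multilinearSpan (F := (FreeAlgebra.lift ℤ v : FreeAlgebra ℤ α →+ A))
    (G := ((zmultiplesHom A) (l.map v).prod).comp (signFunctional S)) (fun w hw ↦ ?_) hf
  simp only [AddMonoidHom.coe_coe, AddMonoidHom.comp_apply, zmultiplesHom_apply, lift_wordMonomial,
    signFunctional_wordMonomial, hv.prod_map_eq_superSign_smul hl hw]

lemma Supercommutes.apply_lift_eq_signFunctional {R A : Type*} [Ring R] [Ring A] [Module R A]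
    {v : α → A} (hv : Supercommutes S v) (hl : l.Pairwise (· ≤ ·)) {D : A →ₗ[R] R}
    (hD : D (l.map v).prod = 1) (hf : f ∈ multilinearSpan l) :
    D (FreeAlgebra.lift ℤ v f) = (signFunctional S f : R) := by
  rw [hv.lift_eq_signFunctional_smul hl hf, map_zsmul, hD, zsmul_one]

lemma signFunctional_eq_sum_erase (hl : l.Nodup) (hS : S ⊆ l.toFinset) (hodd : Odd S.card)
    (hf : f ∈ multilinearSpan l) :
    signFunctional S f = ∑ s ∈ S, insertSign S s l * signFunctional (S.erase s) f := by
  have h := eq_of_mem_multilinearSpan (F := signFunctional S)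
    (G := ∑ s ∈ S, (AddMonoidHom.mulLeft (insertSign S s l)).comp (signFunctional (S.erase s)))
    (fun w hw ↦ ?_) hf
  · simpa using h
  have hwS : w.toFinset ∩ S = S :=
    Finset.inter_eq_right.2 (List.toFinset_eq_of_perm w l hw ▸ hS)
  have hins (s : α) : insertSign S s w = insertSign S s l := (hw.map _).prod_eq
  have key := sum_insertSign_mul_superSign_erase S (hw.nodup_iff.2 hl)
  rw [hwS, if_pos hodd] at key
  simp [signFunctional_wordMonomial, ← key, hins]

lemma intCast_signFunctional_eq_zero_of_even {R : Type*} [Ring R] (hl : l.Nodup)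
    (hf : f ∈ multilinearSpan l)
    (heven : ∀ S ⊆ l.toFinset, Even S.card → (signFunctional S f : R) = 0)
    (hS : S ⊆ l.toFinset) : (signFunctional S f : R) = 0 := by
  obtain he | ho := Nat.even_or_odd S.card
  · exact heven S hS he
  rw [signFunctional_eq_sum_erase hl hS ho hf, Int.cast_sum]
  refine Finset.sum_eq_zero fun s hs ↦ ?_
  have he : Even (S.erase s).card := Finset.card_erase_of_mem hs ▸ Nat.Odd.sub_odd ho odd_one
  rw [Int.cast_mul, heven _ ((Finset.erase_subset s S).trans hS) he, mul_zero]

end SignFunctional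

section Expansion

variable {α A : Type*} [DecidableEq α] [Ring A]

lemma prod_map_add_eq_sum_piecewise (p q : α → A) {l : List α} (hl : l.Nodup) :
    (l.map (p + q)).prod =
      ∑ S ∈ l.toFinset.powerset, (l.map (S.piecewise q p)).prod := by
  induction l with
  | nil => simp
  | cons a l ih =>
    obtain ⟨ha, hl⟩ := List.nodup_cons.1 hl
    rw [List.toFinset_cons, Finset.sum_powerset_insert (by simpa using ha), List.map_cons,
      List.prod_cons, ih hl, Pi.add_apply, add_mul, Finset.mul_sum, Finset.mul_sum]
    congr 1 <;> refine Finset.sum_congr rfl fun S hS ↦ ?_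
    · have haS : a ∉ S := fun h ↦ ha (List.mem_toFinset.1 (Finset.mem_powerset.1 hS h))
      simp [haS]
    · have hmap : l.map ((insert a S).piecewise q p) = l.map (S.piecewise q p) :=
        List.map_congr_left fun i hi ↦
          Finset.piecewise_insert_of_ne _ _ _ (ne_of_mem_of_not_mem hi ha)
      simp [hmap]

lemma lift_add_eq_sum_piecewise (p q : α → A) {l : List α} (hl : l.Nodup) {f : FreeAlgebra ℤ α}
    (hf : f ∈ multilinearSpan l) :
    FreeAlgebra.lift ℤ (p + q) f =
      ∑ S ∈ l.toFinset.powerset, FreeAlgebra.lift ℤ (S.piecewise q p) f := by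
  have h := eq_of_mem_multilinearSpan (F := (FreeAlgebra.lift ℤ (p + q) : FreeAlgebra ℤ α →+ A))
    (G := ∑ S ∈ l.toFinset.powerset, (FreeAlgebra.lift ℤ (S.piecewise q p) : FreeAlgebra ℤ α →+ A))
    (fun w hw ↦ ?_) hf
  · simpa using h
  simp [lift_wordMonomial, prod_map_add_eq_sum_piecewise p q (hw.nodup_iff.2 hl),
    List.toFinset_eq_of_perm w l hw]

end Expansion

section ExteriorAlgebra

open CliffordAlgebra (evenOdd)

variable {R M α : Type*} [CommRing R] [AddCommGroup M] [Module R M]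

lemma exists_add_eq_of_exteriorAlgebra (x : ExteriorAlgebra R M) :
    ∃ p ∈ evenOdd (0 : QuadraticForm R M) 0, ∃ q ∈ evenOdd (0 : QuadraticForm R M) 1, p + q = x :=
  Submodule.mem_sup.1 <|
    (CliffordAlgebra.evenOdd_isCompl (0 : QuadraticForm R M)).sup_eq_top ▸ Submodule.mem_top

lemma commute_of_mem_evenOdd_zero {x : ExteriorAlgebra R M}
    (hx : x ∈ evenOdd (0 : QuadraticForm R M) 0) (y : ExteriorAlgebra R M) : Commute x y := by
  have hcomm {i : ZMod 2} {z : ExteriorAlgebra R M} (hz : z ∈ evenOdd (0 : QuadraticForm R M) i) :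
      Commute x z := by
    simpa using CliffordAlgebra.commute_map_mul_map_of_isOrtho_of_mem_evenOdd_zero_left
      (.id _) (.id _) (fun _ _ ↦ .all _ _) x z hx hz
  obtain ⟨p, hp, q, hq, rfl⟩ := exists_add_eq_of_exteriorAlgebra y
  exact (hcomm hp).add_right (hcomm hq)

lemma mul_eq_neg_of_mem_evenOdd_one {x y : ExteriorAlgebra R M}
    (hx : x ∈ evenOdd (0 : QuadraticForm R M) 1) (hy : y ∈ evenOdd (0 : QuadraticForm R M) 1) :
    x * y = -(y * x) := by
  simpa using CliffordAlgebra.map_mul_map_eq_neg_of_isOrtho_of_mem_evenOdd_one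
      (.id _) (.id _) (fun _ _ ↦ .all _ _) x y hx hy

lemma Supercommutes.piecewise_of_mem_evenOdd [DecidableEq α] {p q : α → ExteriorAlgebra R M}
    (hp : ∀ i, p i ∈ evenOdd (0 : QuadraticForm R M) 0)
    (hq : ∀ i, q i ∈ evenOdd (0 : QuadraticForm R M) 1) (S : Finset α) :
    Supercommutes S (S.piecewise q p) where
  commute i j hi := by
    rw [Finset.piecewise_eq_of_notMem S q p hi]
    exact commute_of_mem_evenOdd_zero (hp i) _
  anticommute i j hi hj _ := by
    rw [Finset.piecewise_eq_of_mem S q p hi, Finset.piecewise_eq_of_mem S q p hj]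
    exact mul_eq_neg_of_mem_evenOdd_one (hq i) (hq j)

lemma exists_dual_prod_map_ι_eq_one [DecidableEq α] {e : α → M} {φ : α → Module.Dual R M}
    {l : List α} (hl : l.Nodup) (h : ∀ i ∈ l, ∀ j ∈ l, φ i (e j) = if i = j then 1 else 0) :
    ∃ D : Module.Dual R (ExteriorAlgebra R M),
      D (l.map fun i ↦ ExteriorAlgebra.ι R (e i)).prod = 1 := by
  let coords : M →ₗ[R] (Fin l.length → R) := LinearMap.pi fun j ↦ φ (l.get j)
  have hcoords : (fun i ↦ coords (e (l.get i))) = (1 : Matrix _ _ R) := by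
    ext i j
    rw [LinearMap.pi_apply, h _ (l.get_mem j) _ (l.get_mem i), Matrix.one_apply]
    simp only [hl.get_inj_iff, eq_comm]
  refine ⟨ExteriorAlgebra.liftAlternating
    (Pi.single l.length (Matrix.detRowAlternating.compLinearMap coords)), ?_⟩
  have hprod : (l.map fun i ↦ ExteriorAlgebra.ι R (e i)).prod =
      ExteriorAlgebra.ιMulti R l.length fun i ↦ e (l.get i) := by
    rw [ExteriorAlgebra.ιMulti_apply]
    conv_lhs => rw [← List.ofFn_get l, List.map_ofFn]
    rfl
  rw [hprod, ExteriorAlgebra.liftAlternating_apply_ιMulti, Pi.single_eq_same,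
    AlternatingMap.compLinearMap_apply]
  exact (congrArg Matrix.det hcoords).trans Matrix.det_one

lemma prod_map_piecewise_one {A : Type*} [Monoid A] [DecidableEq α] (S : Finset α) (v : α → A)
    (l : List α) : (l.map (S.piecewise v 1)).prod = ((l.filter (· ∈ S)).map v).prod := by
  induction l with
  | nil => rfl
  | cons a l ih => by_cases ha : a ∈ S <;> simp [ha, ih]

lemma exists_supercommutes_exteriorAlgebra [DecidableEq α] {e : α → M} {φ : α → Module.Dual R M}
    {l : List α} (hl : l.Nodup) (h : ∀ i ∈ l, ∀ j ∈ l, φ i (e j) = if i = j then 1 else 0)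
    (S : Finset α) :
    ∃ v : α → ExteriorAlgebra R M, Supercommutes S v ∧
      ∃ D : Module.Dual R (ExteriorAlgebra R M), D (l.map v).prod = 1 := by
  obtain ⟨D, hD⟩ := exists_dual_prod_map_ι_eq_one (hl.filter (· ∈ S))
    fun i hi j hj ↦ h i (List.mem_of_mem_filter hi) j (List.mem_of_mem_filter hj)
  have hone : (1 : ExteriorAlgebra R M) ∈ evenOdd (0 : QuadraticForm R M) 0 :=
    Submodule.one_le.1 (CliffordAlgebra.one_le_evenOdd_zero _)
  refine ⟨S.piecewise (fun i ↦ ExteriorAlgebra.ι R (e i)) 1, ?_, D, ?_⟩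
  · exact .piecewise_of_mem_evenOdd (fun _ ↦ hone)
      (fun i ↦ CliffordAlgebra.ι_mem_evenOdd_one _ (e i)) S
  · rwa [prod_map_piecewise_one]

lemma exists_supercommutes_exteriorAlgebra_int {l : List α} (hl : l.Nodup) (S : Finset α) :
    ∃ v : α → ExteriorAlgebra ℤ (α →₀ ℤ), Supercommutes S v ∧
      ∃ D : Module.Dual ℤ (ExteriorAlgebra ℤ (α →₀ ℤ)), D (l.map v).prod = 1 := by
  classical
  exact exists_supercommutes_exteriorAlgebra (e := fun i ↦ Finsupp.single i 1)
    (φ := fun i ↦ Finsupp.lapply i) hl (by simp [Finsupp.single_apply, eq_comm]) S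

lemma mem_IdA_exteriorAlgebra_iff {e : ℕ → M} {φ : ℕ → Module.Dual R M} {m : ℕ}
    (h : ∀ i < m, ∀ j < m, φ i (e j) = if i = j then 1 else 0) {f : FA} (hf : f ∈ Pn m) :
    f ∈ IdA (ExteriorAlgebra R M) ↔
      ∀ S ⊆ Finset.range m, Even S.card → (signFunctional S f : R) = 0 := by
  rw [Pn_eq_multilinearSpan] at hf
  rw [← List.toFinset_range]
  refine ⟨fun hId S _ _ ↦ ?_, fun heven v ↦ ?_⟩
  · obtain ⟨v, hv, D, hD⟩ := exists_supercommutes_exteriorAlgebra (List.nodup_range (n := m))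
      (by simpa using h) S
    rw [← hv.apply_lift_eq_signFunctional List.pairwise_le_range hD hf, hId, map_zero]
  · choose p hp q hq hpq using fun i ↦ exists_add_eq_of_exteriorAlgebra (v i)
    rw [← show p + q = v from funext hpq, lift_add_eq_sum_piecewise p q List.nodup_range hf]
    refine Finset.sum_eq_zero fun S hS ↦ ?_
    rw [(Supercommutes.piecewise_of_mem_evenOdd hp hq S).lift_eq_signFunctional_smul
      List.pairwise_le_range hf, ← Int.cast_smul_eq_zsmul R,
      intCast_signFunctional_eq_zero_of_even List.nodup_range hf heven (Finset.mem_powerset.1 hS),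
      zero_smul]

end ExteriorAlgebra

section Commutators

variable {α A : Type*} [Ring A]

/-- The product of the commutators of consecutive pairs of letters of a word of even length; on
words of odd length the last letter is ignored. -/
noncomputable def pairCommutators : List α → FreeAlgebra ℤ α
  | a :: b :: w => ⁅FreeAlgebra.ι ℤ a, FreeAlgebra.ι ℤ b⁆ * pairCommutators w
  | _ => 1

lemma pairCommutators_mem_multilinearSpan {w : List α} (hw : Even w.length) :
    pairCommutators w ∈ multilinearSpan w := by
  induction w using List.twoStepInduction with
  | nil => exact wordMonomial_mem_multilinearSpan (.refl [])
  | singleton _ => simp at hw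
  | cons_cons a b w ih _ =>
    have hcomm : ⁅FreeAlgebra.ι ℤ a, FreeAlgebra.ι ℤ b⁆ ∈ multilinearSpan [a, b] := by
      have hlie : ⁅FreeAlgebra.ι ℤ a, FreeAlgebra.ι ℤ b⁆ =
          wordMonomial [a, b] - wordMonomial [b, a] := by
        simp only [wordMonomial, Ring.lie_def, List.map_cons, List.map_nil, List.prod_cons,
          List.prod_nil, mul_one]
      rw [hlie]
      exact sub_mem (wordMonomial_mem_multilinearSpan (.refl _))
        (wordMonomial_mem_multilinearSpan (.swap a b []))
    have hw' : Even w.length := by simpa [Nat.even_add_one] using hw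
    rw [pairCommutators, show a :: b :: w = [a, b] ++ w from rfl]
    exact mul_mem_multilinearSpan hcomm (ih hw')

lemma lift_pairCommutators_cons_cons (v : α → A) (a b : α) (w : List α) :
    FreeAlgebra.lift ℤ v (pairCommutators (a :: b :: w)) =
      ⁅v a, v b⁆ * FreeAlgebra.lift ℤ v (pairCommutators w) := by
  simp [pairCommutators, Ring.lie_def]

namespace Supercommutes

variable {S : Finset α} {v : α → A}

lemma lie_eq_zero (hv : Supercommutes S v) {a b : α} (h : a ∉ S ∨ b ∉ S) : ⁅v a, v b⁆ = 0 := by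
  rw [Ring.lie_def, sub_eq_zero]
  exact h.elim (hv.commute a b ·) fun hb ↦ (hv.commute b a hb).symm

lemma lie_eq_two_smul (hv : Supercommutes S v) {a b : α} (ha : a ∈ S) (hb : b ∈ S) (hab : a ≠ b) :
    ⁅v a, v b⁆ = (2 : ℤ) • (v a * v b) := by
  rw [Ring.lie_def, hv.anticommute b a hb ha hab.symm, sub_neg_eq_add, two_zsmul]

lemma lift_pairCommutators_eq_zero (hv : Supercommutes S v) {w : List α} (heven : Even w.length)
    (hS : ∃ a ∈ w, a ∉ S) : FreeAlgebra.lift ℤ v (pairCommutators w) = 0 := by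
  induction w using List.twoStepInduction with
  | nil => simp at hS
  | singleton _ => simp at heven
  | cons_cons a b w ih _ =>
    obtain ⟨c, hc, hcS⟩ := hS
    rw [lift_pairCommutators_cons_cons]
    obtain rfl | rfl | hcw : c = a ∨ c = b ∨ c ∈ w := by simpa using hc
    · rw [hv.lie_eq_zero (.inl hcS), zero_mul]
    · rw [hv.lie_eq_zero (.inr hcS), zero_mul]
    · rw [ih (by simpa [Nat.even_add_one] using heven) ⟨c, hcw, hcS⟩, mul_zero]

lemma lift_pairCommutators (hv : Supercommutes S v) {w : List α} (heven : Even w.length)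
    (hw : w.Nodup) (hS : ∀ a ∈ w, a ∈ S) :
    FreeAlgebra.lift ℤ v (pairCommutators w) = (2 : ℤ) ^ (w.length / 2) • (w.map v).prod := by
  induction w using List.twoStepInduction with
  | nil => simp [pairCommutators]
  | singleton _ => simp at heven
  | cons_cons a b w ih _ =>
    have hab : a ≠ b := fun hab ↦ by simp [hab] at hw
    have hlength : (a :: b :: w).length / 2 = w.length / 2 + 1 := Nat.add_div_right _ two_pos
    rw [lift_pairCommutators_cons_cons, hv.lie_eq_two_smul (hS a (by simp)) (hS b (by simp)) hab,
      ih (by simpa [Nat.even_add_one] using heven) hw.of_cons.of_cons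
        (fun c hc ↦ hS c (by simp [hc])),
      smul_mul_smul_comm, ← pow_succ', ← hlength]
    simp only [List.map_cons, List.prod_cons, mul_assoc]

end Supercommutes

end Commutators

section CommutatorMonomial

variable {α : Type*} [DecidableEq α] {S T : Finset α} {l : List α}

/-- The product of the letters of `l` outside `T` and of the commutators of consecutive letters
of `l` in `T`. -/
noncomputable def commutatorMonomial (l : List α) (T : Finset α) : FreeAlgebra ℤ α :=
  wordMonomial (l.filter (· ∉ T)) * pairCommutators (l.filter (· ∈ T))

lemma filter_notMem_append_filter_mem_perm (l : List α) (T : Finset α) :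
    (l.filter (· ∉ T) ++ l.filter (· ∈ T)).Perm l := by
  simpa using List.perm_append_comm.trans (List.filter_append_perm (· ∈ T) l)

lemma toFinset_filter_mem (hT : T ⊆ l.toFinset) : (l.filter (· ∈ T)).toFinset = T := by
  ext a
  simpa using fun ha ↦ List.mem_toFinset.1 (hT ha)

lemma length_filter_mem (hl : l.Nodup) (hT : T ⊆ l.toFinset) :
    (l.filter (· ∈ T)).length = T.card := by
  rw [← List.toFinset_card_of_nodup (hl.filter _), toFinset_filter_mem hT]

lemma commutatorMonomial_mem_multilinearSpan (hl : l.Nodup) (hT : T ⊆ l.toFinset)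
    (heven : Even T.card) : commutatorMonomial l T ∈ multilinearSpan l := by
  rw [← multilinearSpan_congr (filter_notMem_append_filter_mem_perm l T)]
  exact mul_mem_multilinearSpan (wordMonomial_mem_multilinearSpan (.refl _))
    (pairCommutators_mem_multilinearSpan (length_filter_mem hl hT ▸ heven))

lemma Supercommutes.lift_commutatorMonomial_eq_zero {A : Type*} [Ring A] {v : α → A}
    (hv : Supercommutes S v) (hl : l.Nodup) (hT : T ⊆ l.toFinset) (heven : Even T.card)
    (hTS : ¬ T ⊆ S) :
    FreeAlgebra.lift ℤ v (commutatorMonomial l T) = 0 := by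
  obtain ⟨a, haT, haS⟩ := Finset.not_subset.1 hTS
  have ha : a ∈ l.filter (· ∈ T) :=
    List.mem_filter.2 ⟨List.mem_toFinset.1 (hT haT), decide_eq_true haT⟩
  rw [commutatorMonomial, map_mul,
    hv.lift_pairCommutators_eq_zero (length_filter_mem hl hT ▸ heven) ⟨a, ha, haS⟩, mul_zero]

end CommutatorMonomial

section Triangular

variable {α : Type*} [LinearOrder α] {S T : Finset α} {l : List α}

lemma superSign_filter_append (hl : l.Pairwise (· ≤ ·)) :
    superSign T (l.filter (· ∉ T) ++ l.filter (· ∈ T)) = 1 := by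
  refine superSign_eq_one (List.pairwise_append.2 ⟨?_, ?_, fun a ha b _ ↦ ?_⟩)
  · exact (hl.filter _).imp crossSign_of_le
  · exact (hl.filter _).imp crossSign_of_le
  · exact crossSign_of_notMem_left (by simpa using List.of_mem_filter ha)

lemma Supercommutes.lift_commutatorMonomial_self {A : Type*} [Ring A] {v : α → A}
    (hv : Supercommutes T v) (hl : l.SortedLT) (hT : T ⊆ l.toFinset) (heven : Even T.card) :
    FreeAlgebra.lift ℤ v (commutatorMonomial l T) = (2 : ℤ) ^ (T.card / 2) • (l.map v).prod := by
  have hlength := length_filter_mem hl.nodup hT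
  rw [commutatorMonomial, map_mul, lift_wordMonomial,
    hv.lift_pairCommutators (hlength ▸ heven) (hl.nodup.filter _)
      (fun a ha ↦ by simpa using List.of_mem_filter ha),
    hlength, mul_smul_comm, ← List.prod_append, ← List.map_append,
    hv.prod_map_eq_superSign_smul hl.sortedLE.pairwise (filter_notMem_append_filter_mem_perm l T),
    superSign_filter_append hl.sortedLE.pairwise, one_smul]

lemma signFunctional_commutatorMonomial_self (hl : l.SortedLT) (hT : T ⊆ l.toFinset)
    (heven : Even T.card) : signFunctional T (commutatorMonomial l T) = 2 ^ (T.card / 2) := by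
  obtain ⟨v, hv, D, hD⟩ := exists_supercommutes_exteriorAlgebra_int hl.nodup T
  have key := hv.apply_lift_eq_signFunctional hl.sortedLE.pairwise hD
    (commutatorMonomial_mem_multilinearSpan hl.nodup hT heven)
  rw [hv.lift_commutatorMonomial_self hl hT heven, map_zsmul, hD, zsmul_one] at key
  exact (Int.cast_injective key).symm

lemma signFunctional_commutatorMonomial_eq_zero (hl : l.SortedLT) (hT : T ⊆ l.toFinset)
    (heven : Even T.card) (hTS : ¬ T ⊆ S) : signFunctional S (commutatorMonomial l T) = 0 := by
  obtain ⟨v, hv, D, hD⟩ := exists_supercommutes_exteriorAlgebra_int hl.nodup S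
  have key := hv.apply_lift_eq_signFunctional hl.sortedLE.pairwise hD
    (commutatorMonomial_mem_multilinearSpan hl.nodup hT heven)
  rw [hv.lift_commutatorMonomial_eq_zero hl.nodup hT heven hTS, map_zero] at key
  exact Int.cast_eq_zero.1 key.symm

end Triangular

section Lattice

lemma eq_top_of_triangular {R ι : Type*} [Ring R] [Finite ι] [PartialOrder ι] {P : Set R}
    {U : Submodule R (ι → R)} (hU : ∀ a ∈ P, ∀ g, a • g ∈ U → g ∈ U)
    (h : ∀ t, ∃ f ∈ U, f t ∈ P ∧ ∀ s, ¬ t ≤ s → f s = 0) : U = ⊤ := by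
  classical
  have := Fintype.ofFinite ι
  have hsmul (s : ι) (c : R) : Pi.single s c = c • Pi.single s 1 := by
    rw [← Pi.single_smul, smul_eq_mul, mul_one]
  have hsingle : ∀ t, Pi.single t 1 ∈ U := by
    intro t
    induction t using WellFoundedGT.induction with
    | ind t ih =>
      obtain ⟨f, hf, hft, hf0⟩ := h t
      have hrest : ∑ s ∈ Finset.univ.erase t, Pi.single s (f s) ∈ U := by
        refine sum_mem fun s hs ↦ ?_
        by_cases hts : t ≤ s
        · rw [hsmul]
          exact U.smul_mem _ (ih s (hts.lt_of_ne (Finset.ne_of_mem_erase hs).symm))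
        · rw [hf0 s hts, Pi.single_zero]
          exact zero_mem _
      refine hU _ hft _ ?_
      rwa [← hsmul, ← add_mem_cancel_right hrest,
        Finset.add_sum_erase _ (fun s ↦ Pi.single s (f s)) (Finset.mem_univ t),
        Finset.univ_sum_single]
  refine (Submodule.eq_top_iff').2 fun g ↦ ?_
  rw [← Finset.univ_sum_single g]
  refine sum_mem fun s _ ↦ ?_
  rw [hsmul]
  exact U.smul_mem _ (hsingle s)

variable {R M : Type*} [CommRing R] [AddCommGroup M] [Module R M]

lemma mem_comap_mkQ_torsion' {P : Submonoid R} {N : Submodule R M} {x : M} :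
    x ∈ (Submodule.torsion' R (M ⧸ N) P).comap N.mkQ ↔ ∃ a ∈ P, a • x ∈ N := by
  simp only [Submodule.mem_comap, Submodule.mem_torsion'_iff, Subtype.exists, Submonoid.mk_smul,
    Submodule.mkQ_apply, ← Submodule.Quotient.mk_smul, Submodule.Quotient.mk_eq_zero, exists_prop]

lemma exists_smul_mem_of_triangular {ι : Type*} [Finite ι] [PartialOrder ι] {P : Submonoid R}
    {N : Submodule R (ι → R)} (h : ∀ t, ∃ f ∈ N, f t ∈ P ∧ ∀ s, ¬ t ≤ s → f s = 0)
    (g : ι → R) : ∃ a ∈ P, a • g ∈ N := by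
  suffices hU : (Submodule.torsion' R ((ι → R) ⧸ N) P).comap N.mkQ = ⊤ from
    mem_comap_mkQ_torsion'.1 (hU ▸ Submodule.mem_top)
  refine eq_top_of_triangular (P := P) (fun a ha g hg ↦ ?_) fun t ↦ ?_
  · obtain ⟨b, hb, hbag⟩ := mem_comap_mkQ_torsion'.1 hg
    exact mem_comap_mkQ_torsion'.2 ⟨b * a, mul_mem hb ha, by rwa [mul_smul]⟩
  · obtain ⟨f, hf, hft⟩ := h t
    exact ⟨f, mem_comap_mkQ_torsion'.2 ⟨1, one_mem P, by rwa [one_smul]⟩, hft⟩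

lemma nonempty_linearEquiv_of_exists_smul_mem [IsDomain R] [IsPrincipalIdealRing R]
    [Module.Free R M] [Module.Finite R M] {N : Submodule R M}
    (h : ∀ x, ∃ a : R, a ≠ 0 ∧ a • x ∈ N) : Nonempty (N ≃ₗ[R] M) := by
  have htorsion : Module.IsTorsion R (M ⧸ N) := by
    intro x
    obtain ⟨x, rfl⟩ := N.mkQ_surjective x
    obtain ⟨a, ha, hax⟩ := h x
    exact ⟨⟨a, mem_nonZeroDivisors_of_ne_zero ha⟩, (Submodule.Quotient.mk_eq_zero N).2 hax⟩
  refine FiniteDimensional.nonempty_linearEquiv_of_finrank_eq ?_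
  rw [← N.finrank_quotient_add_finrank, htorsion.finrank_eq_zero, zero_add]

lemma nonempty_linearEquiv_zmod_of_triangular {ι : Type*} [Finite ι] [PartialOrder ι] {ℓ : ℕ}
    (hℓ : ℓ = 0 ∨ Odd ℓ) {N : Submodule (ZMod ℓ) (ι → ZMod ℓ)}
    (h : ∀ t, ∃ f ∈ N, f t ∈ Submonoid.powers 2 ∧ ∀ s, ¬ t ≤ s → f s = 0) :
    Nonempty (N ≃ₗ[ZMod ℓ] (ι → ZMod ℓ)) := by
  have hsmul := exists_smul_mem_of_triangular h
  obtain rfl | hℓ := hℓ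
  · have : IsPrincipalIdealRing (ZMod 0) := inferInstanceAs (IsPrincipalIdealRing ℤ)
    refine nonempty_linearEquiv_of_exists_smul_mem fun x ↦ ?_
    obtain ⟨_, ⟨k, rfl⟩, hkx⟩ := hsmul x
    exact ⟨_, pow_ne_zero k two_ne_zero, hkx⟩
  · have htwo : IsUnit (2 : ZMod ℓ) :=
      mod_cast (ZMod.isUnit_iff_coprime 2 ℓ).2 (Nat.coprime_two_left.2 hℓ)
    have htop : N = ⊤ := (Submodule.eq_top_iff').2 fun x ↦ by
      obtain ⟨_, ⟨k, rfl⟩, hkx⟩ := hsmul x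
      exact (N.smul_mem_iff_of_isUnit (htwo.pow k)).1 hkx
    exact ⟨htop ▸ Submodule.topEquiv⟩

end Lattice

section EvenSubsets

lemma two_mul_card_filter_even_card_powerset {α : Type*} {s : Finset α} (hs : s.Nonempty) :
    2 * (s.powerset.filter fun t ↦ Even t.card).card = 2 ^ s.card := by
  have hsum := Finset.sum_powerset_neg_one_pow_card_of_nonempty hs
  have hcard := Finset.card_filter_add_card_filter_not (s := s.powerset) fun t ↦ Even t.card
  have hterm (t : Finset α) : (-1 : ℤ) ^ t.card = if Even t.card then 1 else -1 := by
    split_ifs with h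
    · exact h.neg_one_pow
    · exact (Nat.not_even_iff_odd.1 h).neg_one_pow
  simp only [hterm, Finset.sum_ite, Finset.sum_const, nsmul_eq_mul, mul_one, mul_neg] at hsum
  rw [Finset.card_powerset] at hcard
  omega

/-- The subsets of even cardinality of `{0, …, m - 1}`. -/
abbrev EvenSubset (m : ℕ) : Type :=
  {S : Finset ℕ // S ∈ (Finset.range m).powerset.filter fun S ↦ Even S.card}

lemma card_evenSubset (n : ℕ) : Nat.card (EvenSubset (n + 1)) = 2 ^ n := by
  have h := two_mul_card_filter_even_card_powerset (Finset.nonempty_range_add_one (n := n))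
  rw [Finset.card_range, pow_succ'] at h
  rw [Nat.card_eq_fintype_card, Fintype.card_coe]
  exact Nat.eq_of_mul_eq_mul_left two_pos h

/-- The tuple of the sign functionals, modulo `ℓ`, of all even subsets. -/
noncomputable def evenSigns (ℓ m : ℕ) : Pn m →+ (EvenSubset m → ZMod ℓ) :=
  .pi fun S ↦ (Int.castAddHom (ZMod ℓ)).comp ((signFunctional S.1).comp (Pn m).subtype)

lemma ker_evenSigns {R M : Type*} [CommRing R] [AddCommGroup M] [Module R M] (ℓ : ℕ) [CharP R ℓ]
    {e : ℕ → M} {φ : ℕ → Module.Dual R M} {m : ℕ}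
    (h : ∀ i < m, ∀ j < m, φ i (e j) = if i = j then 1 else 0) :
    (evenSigns ℓ m).ker = (IdA (ExteriorAlgebra R M)).addSubgroupOf (Pn m) := by
  have hcast (z : ℤ) : (z : ZMod ℓ) = 0 ↔ (z : R) = 0 := by
    rw [CharP.intCast_eq_zero_iff (ZMod ℓ) ℓ, CharP.intCast_eq_zero_iff R ℓ]
  ext f
  rw [AddMonoidHom.mem_ker, AddSubgroup.mem_addSubgroupOf, mem_IdA_exteriorAlgebra_iff h f.2,
    funext_iff]
  simp [evenSigns, hcast]

lemma exists_mem_range_evenSigns (ℓ : ℕ) {m : ℕ} (T : EvenSubset m) :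
    ∃ f ∈ (evenSigns ℓ m).range, f T ∈ Submonoid.powers 2 ∧ ∀ S, ¬ T ≤ S → f S = 0 := by
  obtain ⟨T, hT⟩ := T
  obtain ⟨hTm, heven⟩ : T ⊆ (List.range m).toFinset ∧ Even T.card := by
    simpa only [Finset.mem_filter, Finset.mem_powerset, List.toFinset_range] using hT
  have hmem : commutatorMonomial (List.range m) T ∈ Pn m :=
    Pn_eq_multilinearSpan m ▸ commutatorMonomial_mem_multilinearSpan List.nodup_range hTm heven
  refine ⟨_, ⟨⟨_, hmem⟩, rfl⟩, ⟨T.card / 2, ?_⟩, fun S hTS ↦ ?_⟩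
  · simp [evenSigns, signFunctional_commutatorMonomial_self (List.sortedLT_range m) hTm heven]
  · simp [evenSigns,
      signFunctional_commutatorMonomial_eq_zero (List.sortedLT_range m) hTm heven hTS]

lemma nonempty_range_evenSigns_addEquiv {ℓ : ℕ} (hℓ : ℓ = 0 ∨ Odd ℓ) (m : ℕ) :
    Nonempty ((evenSigns ℓ m).range ≃+ (EvenSubset m → ZMod ℓ)) := by
  obtain ⟨E⟩ := nonempty_linearEquiv_zmod_of_triangular hℓ
    (N := AddSubgroup.toZModSubmodule ℓ (evenSigns ℓ m).range) (exists_mem_range_evenSigns ℓ)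
  exact ⟨E.toAddEquiv⟩

end EvenSubsets

theorem stmt_18_general {R M : Type*} [CommRing R] [AddCommGroup M] [Module R M] (ℓ : ℕ)
    [CharP R ℓ] (hℓ : ℓ = 0 ∨ Odd ℓ) (n : ℕ) {e : ℕ → M} {φ : ℕ → Module.Dual R M}
    (h : ∀ i < n + 1, ∀ j < n + 1, φ i (e j) = if i = j then 1 else 0) :
    Nonempty ((Pn (n + 1) ⧸ (IdA (ExteriorAlgebra R M)).addSubgroupOf (Pn (n + 1))) ≃+
      (Fin (2 ^ n) → ZMod ℓ)) := by
  obtain ⟨E⟩ := nonempty_range_evenSigns_addEquiv hℓ (n + 1)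
  let σ : Fin (2 ^ n) ≃ EvenSubset (n + 1) :=
    (finCongr (card_evenSubset n).symm).trans (Finite.equivFin _).symm
  exact ⟨(QuotientAddGroup.quotientAddEquivOfEq (ker_evenSigns ℓ h).symm).trans <|
    (QuotientAddGroup.quotientKerEquivRange _).trans <|
      E.trans (LinearEquiv.funCongrLeft ℤ (ZMod ℓ) σ).toAddEquiv⟩

theorem stmt_18 (R : Type) [CommRing R] (ℓ : ℕ) (hR : CharP R ℓ) (hℓ : ℓ = 0 ∨ Odd ℓ)
    (n : ℕ) :
    Nonempty ((Pn (n + 1) ⧸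
        (IdA (ExteriorAlgebra R (ℕ →₀ R))).addSubgroupOf (Pn (n + 1))) ≃+
      (Fin (2 ^ n) → ZMod ℓ)) :=
  stmt_18_general ℓ hℓ n (e := fun i ↦ Finsupp.single i 1) (φ := fun i ↦ Finsupp.lapply i)
    (by simp [Finsupp.single_apply, eq_comm])
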